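/- Let Λ be a right artinian ring with identity having, up to isomorphism, only finitely many finitely generated indecomposable right Λ-modules. Let U be the direct sum of a complete set of representatives of the finitely generated indecomposable right Λ-modules, and let W be the direct sum of the injective hulls of a complete set of representatives of the simple right Λ-modules; assume W is a finitely generated Λ-module. Set R = End_Λ(U) and view Hom_Λ(U, W) as a right R-module via precomposition. Then Hom_Λ(U, W) is a minimal faithful right R-module and it is balanced, i.e., the canonical ring homomorphism R → End_S(Hom_Λ(U, W)) is surjective, where S = End_R(Hom_Λ(U, W)). -/

import Mathlib

/-!
STATEMENT 8 (Lemma `l6` of the paper).  Λ right artinian with finitely many finitely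
generated indecomposable right modules, `U` the direct sum of a complete set of
representatives of these, `W` the (finitely generated) direct sum of the injective hulls of a
complete set of representatives of the simple right Λ-modules, `R = End_Λ(U)`.  Then
`Hom_Λ(U, W)` is a minimal faithful balanced right `R`-module.

Right Λ-modules are formalized as left `Λᵐᵒᵖ`-modules; `R = End_Λ(U)` is then Mathlib's
`Module.End Λᵐᵒᵖ U`, and the right `R`-module `Hom_Λ(U, W)` (action by precomposition) is a
left `Rᵐᵒᵖ`-module.  Balancedness is formalized as surjectivity of the canonical map
`R → End_S(Hom_Λ(U, W))`, `S = End_R(Hom_Λ(U, W))`.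
-/

universe u

section Defs

variable (R : Type u) [Ring R]

/-- A family of submodules realizes `M` as an internal direct sum. -/
def IsInternalDirectSum {ι : Type*} {M : Type*} [AddCommGroup M] [Module R M]
    (N : ι → Submodule R M) : Prop :=
  iSupIndep N ∧ (⨆ i, N i) = ⊤

/-- A module is indecomposable if it is nonzero and is not the internal direct sum of two
nonzero submodules. -/
def IsIndecomposableModule (M : Type*) [AddCommGroup M] [Module R M] : Prop :=
  Nontrivial M ∧ ∀ N₁ N₂ : Submodule R M, IsCompl N₁ N₂ → N₁ = ⊥ ∨ N₂ = ⊥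

/-- A ring has finite representation type if it is left artinian and has, up to isomorphism,
only finitely many finitely generated indecomposable left modules. -/
def HasFiniteRepresentationType : Prop :=
  IsArtinian R R ∧
    ∃ (n : ℕ) (M : Fin n → ModuleCat.{u} R),
      (∀ i, Module.Finite R (M i) ∧ IsIndecomposableModule R (M i)) ∧
      ∀ X : ModuleCat.{u} R, Module.Finite R X → IsIndecomposableModule R X →
        ∃ i, Nonempty (X ≃ₗ[R] M i)

/-- `V` is the direct sum of a complete set of representatives of the isomorphism classes of
finitely generated indecomposable left `R`-modules. -/
def IsSumOfAllIndecomposables (V : Type u) [AddCommGroup V] [Module R V] : Prop :=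
  ∃ (ι : Type u) (N : ι → Submodule R V),
    IsInternalDirectSum R N ∧
    (∀ i, (N i).FG ∧ IsIndecomposableModule R (N i)) ∧
    (∀ i j, Nonempty ((N i) ≃ₗ[R] (N j)) → i = j) ∧
    ∀ X : ModuleCat.{u} R, Module.Finite R X → IsIndecomposableModule R X →
      ∃ i, Nonempty (X ≃ₗ[R] N i)

/-- A submodule is essential if it meets every nonzero submodule nontrivially. -/
def IsEssentialSubmodule {M : Type*} [AddCommGroup M] [Module R M] (N : Submodule R M) : Prop :=
  ∀ K : Submodule R M, K ≠ ⊥ → N ⊓ K ≠ ⊥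

/-- `E` is an injective hull of `S`: `E` is injective and contains a copy of `S` as an essential
submodule. -/
def IsInjectiveHullOf (E S : Type*) [AddCommGroup E] [Module R E] [AddCommGroup S]
    [Module R S] : Prop :=
  Module.Injective R E ∧
    ∃ j : S →ₗ[R] E, Function.Injective j ∧ IsEssentialSubmodule R (LinearMap.range j)

end Defs

section EndOp

variable {Λ : Type u} [Ring Λ] (V W : Type u) [AddCommGroup V] [Module Λ V]
  [AddCommGroup W] [Module Λ W]

/-- `Hom_Λ(V, W)` is a left module over the paper's `End_Λ(V)`, i.e. over
`(Module.End Λ V)ᵐᵒᵖ`, via composition: `r • α = α ∘ r`. -/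
instance homModuleEndOp : Module (Module.End Λ V)ᵐᵒᵖ (V →ₗ[Λ] W) where
  smul r α := α ∘ₗ r.unop
  one_smul α := by ext v; rfl
  mul_smul r s α := by ext v; rfl
  smul_zero r := by ext v; rfl
  smul_add r α β := by ext v; rfl
  add_smul r s α := by ext v; exact α.map_add _ _
  zero_smul α := by ext v; exact α.map_zero

@[simp] lemma endOp_smul_apply (r : (Module.End Λ V)ᵐᵒᵖ) (α : V →ₗ[Λ] W) (v : V) :
    (r • α) v = α (r.unop v) := rfl

end EndOp

section Faithful

variable (R : Type u) [Ring R]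

/-- A module is faithful if its annihilator is zero. -/
def IsFaithfulModule (M : Type*) [AddCommGroup M] [Module R M] : Prop :=
  ∀ r : R, (∀ m : M, r • m = 0) → r = 0

/-- A module is minimal faithful if it is faithful and isomorphic to a direct summand of every
faithful module. -/
def IsMinimalFaithfulModule (M : Type u) [AddCommGroup M] [Module R M] : Prop :=
  IsFaithfulModule R M ∧
    ∀ N : ModuleCat.{u} R, IsFaithfulModule R N →
      ∃ (i : M →ₗ[R] N) (p : N →ₗ[R] M), p ∘ₗ i = LinearMap.id

end Faithful

section Balanced

variable {T : Type*} [Ring T] {M : Type*} [AddCommGroup M] [Module Tᵐᵒᵖ M]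

/-- For a right `T`-module `M` (formalized as a left `Tᵐᵒᵖ`-module) and `r : T`, the action
of `r` on `M` as an `End_T(M)`-linear endomorphism.  Here `S := Module.End Tᵐᵒᵖ M` acts on
`M` by application. -/
def rightSmulEnd (r : T) : M →ₗ[Module.End Tᵐᵒᵖ M] M where
  toFun m := MulOpposite.op r • m
  map_add' m m' := smul_add _ m m'
  map_smul' s m := (map_smul s (MulOpposite.op r) m).symm

end Balanced

open scoped DirectSum

section HelperLemmas

variable {A : Type u} [Ring A] {U W : Type u} [AddCommGroup U] [Module A U]
  [AddCommGroup W] [Module A W]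

/-- `A` is a retract of a finite power of `U`. -/
def IsGen (A : Type u) [Ring A] (U : Type u) [AddCommGroup U] [Module A U] : Prop :=
  ∃ (κ : Type) (_ : Fintype κ) (a : κ → U) (b : κ → (U →ₗ[A] A)), ∑ k, b k (a k) = 1

/-- The dual basis endomorphism `y ↦ b y • x`. -/
def dualEnd (b : U →ₗ[A] A) (x : U) : Module.End A U := b.smulRight x

lemma hom_injective_of_isGen (hg : IsGen A U) (hW : Module.Injective A W) :
    Module.Injective (Module.End A U)ᵐᵒᵖ (U →ₗ[A] W) := by
  obtain ⟨κ, _, v, b, hb⟩ := hg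
  have hdb : ∀ u : U, ∑ k, dualEnd (b k) u (v k) = u := by
    intro u
    simp only [dualEnd, LinearMap.smulRight_apply]
    rw [← Finset.sum_smul, hb, one_smul]
  have hcomp : ∀ (r : Module.End A U) (k : κ) (u : U),
      dualEnd (b k) (r u) = r * dualEnd (b k) u := by
    intro r k u; ext y; simp [dualEnd]
  have hadd : ∀ (k : κ) (u u' : U),
      dualEnd (b k) (u + u') = dualEnd (b k) u + dualEnd (b k) u' := by
    intro k u u'; ext y; simp [dualEnd]
  have hsum : ∀ (k : κ) (g : κ → U),
      dualEnd (b k) (∑ l, g l) = ∑ l, dualEnd (b k) (g l) := by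
    intro k g; ext y; simp [dualEnd, Finset.smul_sum]
  have hexp : ∀ (k : κ) (a : A) (x : U), dualEnd (b k) (a • x) =
      ∑ l, dualEnd (b l) x * dualEnd (b k) (a • v l) := by
    intro k a x
    conv_lhs => rw [← hdb x]
    rw [Finset.smul_sum, hsum]
    refine Finset.sum_congr rfl fun l _ => ?_
    rw [← map_smul, hcomp]
  apply Module.Baer.injective
  intro I g
  have hmulI : ∀ r s : Module.End A U, MulOpposite.op r ∈ I → MulOpposite.op (r * s) ∈ I := by
    intro r s h
    rw [MulOpposite.op_mul]
    exact I.mul_mem_left _ h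
  have hg : ∀ (r s : Module.End A U) (h : MulOpposite.op r ∈ I) (u : U),
      g ⟨MulOpposite.op (r * s), hmulI r s h⟩ u = g ⟨MulOpposite.op r, h⟩ (s u) := by
    intro r s h u
    have := g.map_smul (MulOpposite.op s) ⟨MulOpposite.op r, h⟩
    exact DFunLike.congr_fun this u
  let G : Module.End A U → U → W := fun r u =>
    open Classical in if h : MulOpposite.op r ∈ I then g ⟨MulOpposite.op r, h⟩ u else 0
  have hG : ∀ (r) (h : MulOpposite.op r ∈ I) (u), G r u = g ⟨MulOpposite.op r, h⟩ u := by
    intro r h u; simp only [G, dif_pos h]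
  have hGadd : ∀ r s u, MulOpposite.op r ∈ I → MulOpposite.op s ∈ I →
      G (r + s) u = G r u + G s u := by
    intro r s u hr hs
    rw [hG _ hr, hG _ hs, hG _ (by rw [MulOpposite.op_add]; exact I.add_mem hr hs)]
    exact DFunLike.congr_fun (g.map_add ⟨_, hr⟩ ⟨_, hs⟩) u
  have hGsum : ∀ (f : κ → Module.End A U) (u : U), (∀ l, MulOpposite.op (f l) ∈ I) →
      G (∑ l, f l) u = ∑ l, G (f l) u := by
    intro f u hf
    have : ∀ s : Finset κ, MulOpposite.op (∑ l ∈ s, f l) ∈ I ∧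
        G (∑ l ∈ s, f l) u = ∑ l ∈ s, G (f l) u := by
      classical
      intro s
      induction s using Finset.induction_on with
      | empty =>
        refine ⟨by simp, ?_⟩
        simp only [Finset.sum_empty]
        rw [hG _ (by simp)]
        exact DFunLike.congr_fun g.map_zero u
      | insert l s hl ih =>
        rw [Finset.sum_insert hl, Finset.sum_insert hl]
        refine ⟨?_, ?_⟩
        · rw [MulOpposite.op_add]; exact I.add_mem (hf l) ih.1
        · rw [hGadd _ _ _ (hf l) ih.1, ih.2]
    exact (this Finset.univ).2
  have hGmul : ∀ r s u, MulOpposite.op r ∈ I → G (r * s) u = G r (s u) := by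
    intro r s u hr
    rw [hG _ (hmulI r s hr), hG _ hr, hg]
  have hGlinadd : ∀ r u u', MulOpposite.op r ∈ I → G r (u + u') = G r u + G r u' := by
    intro r u u' hr
    rw [hG _ hr, hG _ hr, hG _ hr, map_add]
  have hGlinsum : ∀ r (f : κ → U), MulOpposite.op r ∈ I → G r (∑ l, f l) = ∑ l, G r (f l) := by
    intro r f hr
    simp_rw [hG _ hr, map_sum]
  have hGlinsmul : ∀ r (a : A) u, MulOpposite.op r ∈ I → G r (a • u) = a • G r u := by
    intro r a u hr
    rw [hG _ hr, hG _ hr, map_smul]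
  have hmem_smul : ∀ (a : A) (x : U), (∀ k, MulOpposite.op (dualEnd (b k) x) ∈ I) →
      ∀ k, MulOpposite.op (dualEnd (b k) (a • x)) ∈ I := by
    intro a x hx k
    rw [hexp, ← MulOpposite.opAddEquiv_apply, map_sum]
    exact I.sum_mem fun l _ => hmulI _ _ (hx l)
  let IU : Submodule A U :=
    { carrier := {x | ∀ k, MulOpposite.op (dualEnd (b k) x) ∈ I}
      add_mem' := by
        intro x y hx hy k
        rw [hadd, MulOpposite.op_add]
        exact I.add_mem (hx k) (hy k)
      zero_mem' := by
        intro k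
        have : dualEnd (b k) (0 : U) = 0 := by ext y; simp [dualEnd]
        rw [this]; simp
      smul_mem' := by
        intro a x hx
        exact hmem_smul a x hx }
  let α₀ : IU →ₗ[A] W :=
    { toFun := fun x => ∑ k, G (dualEnd (b k) x.1) (v k)
      map_add' := by
        intro x y
        rw [← Finset.sum_add_distrib]
        refine Finset.sum_congr rfl fun k _ => ?_
        rw [Submodule.coe_add, hadd, hGadd _ _ _ (x.2 k) (y.2 k)]
      map_smul' := by
        intro a x
        simp only [Submodule.coe_smul, RingHom.id_apply]
        have h1 : ∀ k, G (dualEnd (b k) (a • x.1)) (v k) =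
            ∑ l, G (dualEnd (b l) x.1) (dualEnd (b k) (a • v l) (v k)) := by
          intro k
          rw [hexp, hGsum _ _ (fun l => hmulI _ _ (x.2 l))]
          exact Finset.sum_congr rfl fun l _ => hGmul _ _ _ (x.2 l)
        simp_rw [h1]
        rw [Finset.sum_comm, Finset.smul_sum]
        refine Finset.sum_congr rfl fun l _ => ?_
        rw [← hGlinsum _ _ (x.2 l), hdb, hGlinsmul _ _ _ (x.2 l)] }
  obtain ⟨α, hα⟩ := hW.out IU.subtype IU.injective_subtype α₀
  refine ⟨LinearMap.toSpanSingleton _ _ α, ?_⟩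
  intro r hr
  ext u
  have hr' : MulOpposite.op r.unop ∈ I := hr
  have hmem : r.unop u ∈ IU := by
    intro k
    rw [hcomp]
    exact hmulI _ _ hr
  have h2 := hα ⟨r.unop u, hmem⟩
  have h3 : α₀ ⟨r.unop u, hmem⟩ = G r.unop u := by
    change ∑ k, G (dualEnd (b k) (r.unop u)) (v k) = _
    simp_rw [hcomp]
    rw [Finset.sum_congr rfl fun k _ => hGmul r.unop (dualEnd (b k) u) (v k) hr,
      ← hGlinsum _ _ hr', hdb]
  rw [h3, hG _ hr'] at h2
  exact h2

/-- `W` cogenerates all modules. -/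
def IsCogen (A : Type u) [Ring A] (W : Type u) [AddCommGroup W] [Module A W] : Prop :=
  ∀ (X : Type u) [AddCommGroup X] [Module A X] (x : X), x ≠ 0 → ∃ f : X →ₗ[A] W, f x ≠ 0

lemma hom_faithful_of_isCogen (hW : IsCogen A W) :
    IsFaithfulModule (Module.End A U)ᵐᵒᵖ (U →ₗ[A] W) := by
  intro r hr
  apply MulOpposite.unop_injective
  ext u
  by_contra hne
  obtain ⟨f, hf⟩ := hW U _ hne
  exact hf (DFunLike.congr_fun (hr f) u)

lemma exists_finite_embedding [IsArtinian A U] (hW : IsCogen A W) :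
    ∃ (s : Finset (U →ₗ[A] W)), ∀ u, (∀ f ∈ s, f u = 0) → u = 0 := by
  classical
  obtain ⟨_, ⟨s, rfl⟩, hs⟩ := IsArtinian.set_has_minimal
    (Set.range fun s : Finset (U →ₗ[A] W) => s.inf LinearMap.ker) ⟨_, ⟨∅, rfl⟩⟩
  refine ⟨s, fun u hu => ?_⟩
  by_contra hne
  obtain ⟨f, hf⟩ := hW U u hne
  refine hs _ ⟨insert f s, rfl⟩ ?_
  simp only [Finset.inf_insert]
  refine lt_of_le_of_ne inf_le_right fun heq => hf ?_
  have hu' : u ∈ s.inf LinearMap.ker := by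
    simp only [Submodule.mem_finsetInf, LinearMap.mem_ker]
    exact hu
  rw [← heq] at hu'
  exact hu'.1

/-- Postcomposition as an endomorphism of the right module `Hom(U, W)`. -/
def postComp (β : W →ₗ[A] W) : Module.End (Module.End A U)ᵐᵒᵖ (U →ₗ[A] W) where
  toFun f := β ∘ₗ f
  map_add' f g := by ext; simp
  map_smul' r f := by ext; simp

lemma hom_balanced [IsArtinian A U] (hW : IsCogen A W) (hinj : Module.Injective A W) :
    Function.Surjective
      (fun r : Module.End A U => rightSmulEnd (M := U →ₗ[A] W) r) := by
  classical
  obtain ⟨s, hs⟩ := exists_finite_embedding (U := U) hW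
  intro h
  have hpost : ∀ (β : W →ₗ[A] W) (f : U →ₗ[A] W), h (β ∘ₗ f) = β ∘ₗ h f := by
    intro β f
    exact h.map_smul (postComp β) f
  let F : U →ₗ[A] (s → W) := LinearMap.pi fun f => f.1
  let H : U →ₗ[A] (s → W) := LinearMap.pi fun f => h f.1
  have hF : Function.Injective F := by
    rw [← LinearMap.ker_eq_bot, LinearMap.ker_eq_bot']
    intro u hu
    exact hs u fun f hf => congr_fun hu ⟨f, hf⟩
  have hdec : ∀ β : (s → W) →ₗ[A] W, h (β ∘ₗ F) = β ∘ₗ H := by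
    intro β
    have h1 : ∀ K : U →ₗ[A] (s → W), β ∘ₗ K =
        ∑ i, (β ∘ₗ LinearMap.single A (fun _ : s => W) i) ∘ₗ (LinearMap.proj i ∘ₗ K) := by
      intro K
      ext u
      simp only [LinearMap.comp_apply, LinearMap.sum_apply, LinearMap.proj_apply]
      rw [← map_sum]
      congr 1
      exact (Finset.univ_sum_single (K u)).symm
    rw [h1 F, h1 H, map_sum]
    refine Finset.sum_congr rfl fun i _ => ?_
    rw [hpost]
    rfl
  have hrange : ∀ u, H u ∈ LinearMap.range F := by
    intro u
    by_contra hne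
    have hne' : (LinearMap.range F).mkQ (H u) ≠ 0 := by
      simpa [Submodule.Quotient.mk_eq_zero] using hne
    obtain ⟨γ, hγ⟩ := hW ((s → W) ⧸ LinearMap.range F) _ hne'
    have h2 := hdec (γ ∘ₗ (LinearMap.range F).mkQ)
    have h3 : (γ ∘ₗ (LinearMap.range F).mkQ) ∘ₗ F = 0 := by
      ext x
      have : (LinearMap.range F).mkQ (F x) = 0 := by
        rw [Submodule.mkQ_apply, Submodule.Quotient.mk_eq_zero]; exact ⟨x, rfl⟩
      simp only [LinearMap.comp_apply, this, map_zero, LinearMap.zero_apply]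
    rw [h3, map_zero] at h2
    exact hγ (DFunLike.congr_fun h2 u).symm
  let r : Module.End A U :=
    (LinearEquiv.ofInjective F hF).symm.toLinearMap ∘ₗ H.codRestrict (LinearMap.range F) hrange
  have hr : F ∘ₗ r = H := by
    ext1 u
    have := LinearEquiv.apply_symm_apply (LinearEquiv.ofInjective F hF)
      (H.codRestrict (LinearMap.range F) hrange u)
    exact congrArg Subtype.val this
  refine ⟨r, ?_⟩
  ext1 f
  obtain ⟨β, hβ'⟩ := hinj.out F hF f
  have hβ : β ∘ₗ F = f := LinearMap.ext hβ'
  have h4 : f ∘ₗ r = h f := by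
    rw [← hβ, hdec, LinearMap.comp_assoc, hr]
  exact h4

end HelperLemmas

section HelperLemmas2

variable {A : Type u} [Ring A] {U W : Type u} [AddCommGroup U] [Module A U]
  [AddCommGroup W] [Module A W]

/-- `X` is a retract of a finite power of `U`. -/
def IsRetractOfPower (A : Type u) [Ring A] (U : Type u) [AddCommGroup U] [Module A U]
    (X : Type u) [AddCommGroup X] [Module A X] : Prop :=
  ∃ (κ : Type) (_ : Fintype κ) (a : κ → (X →ₗ[A] U)) (b : κ → (U →ₗ[A] X)),
    ∑ k, b k ∘ₗ a k = LinearMap.id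

lemma IsRetractOfPower.congr {X Y : Type u} [AddCommGroup X] [Module A X] [AddCommGroup Y]
    [Module A Y] (e : X ≃ₗ[A] Y) (h : IsRetractOfPower A U X) : IsRetractOfPower A U Y := by
  obtain ⟨κ, _, a, b, hab⟩ := h
  refine ⟨κ, inferInstance, fun k => a k ∘ₗ e.symm.toLinearMap, fun k => e.toLinearMap ∘ₗ b k, ?_⟩
  ext y
  have := congrArg e (DFunLike.congr_fun hab (e.symm y))
  simpa [LinearMap.sum_apply, map_sum] using this

lemma IsRetractOfPower.sum {X : Type u} [AddCommGroup X] [Module A X] (K₁ K₂ : Submodule A X)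
    (hK : IsCompl K₁ K₂)
    (h₁ : IsRetractOfPower A U K₁) (h₂ : IsRetractOfPower A U K₂) : IsRetractOfPower A U X := by
  obtain ⟨κ₁, _, a₁, b₁, hab₁⟩ := h₁
  obtain ⟨κ₂, _, a₂, b₂, hab₂⟩ := h₂
  refine ⟨κ₁ ⊕ κ₂, inferInstance,
    Sum.elim (fun k => a₁ k ∘ₗ K₁.projectionOnto K₂ hK)
      (fun k => a₂ k ∘ₗ K₂.projectionOnto K₁ hK.symm),
    Sum.elim (fun k => K₁.subtype ∘ₗ b₁ k) (fun k => K₂.subtype ∘ₗ b₂ k), ?_⟩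
  ext x
  have e₁ := congrArg Subtype.val (DFunLike.congr_fun hab₁ (K₁.projectionOnto K₂ hK x))
  have e₂ := congrArg Subtype.val (DFunLike.congr_fun hab₂ (K₂.projectionOnto K₁ hK.symm x))
  simp only [LinearMap.sum_apply, LinearMap.comp_apply, LinearMap.id_apply,
    AddSubmonoidClass.coe_finsetSum] at e₁ e₂
  simp only [Fintype.sum_sum_type, LinearMap.add_apply, LinearMap.sum_apply, LinearMap.comp_apply,
    LinearMap.id_apply, Sum.elim_inl, Sum.elim_inr, Submodule.subtype_apply, e₁, e₂]
  exact Submodule.projection_add_projection_eq_self hK x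

lemma isRetractOfPower_of_indec
    (hind : ∀ (X : Type u) [AddCommGroup X] [Module A X], Module.Finite A X →
      IsIndecomposableModule A X → IsRetractOfPower A U X)
    (X : Type u) [AddCommGroup X] [Module A X] [IsArtinian A X] [IsNoetherian A X] :
    IsRetractOfPower A U X := by
  have key : ∀ K : Submodule A X, IsRetractOfPower A U K := by
    intro K
    induction K using WellFoundedLT.induction with
    | ind K ih =>
    by_cases hb : K = ⊥
    · subst hb
      exact ⟨Empty, inferInstance, fun k => k.elim, fun k => k.elim, Subsingleton.elim _ _⟩
    by_cases hi : IsIndecomposableModule A K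
    · exact hind K inferInstance hi
    have hnt : Nontrivial K := (Submodule.nontrivial_iff_ne_bot).2 hb
    simp only [IsIndecomposableModule, hnt, true_and, not_forall, not_or] at hi
    obtain ⟨N₁, N₂, hc, h1, h2⟩ := hi
    have aux : ∀ P Q : Submodule A K, IsCompl P Q → Q ≠ ⊥ → IsRetractOfPower A U P := by
      intro P Q hPQ hQ
      have hlt : P.map K.subtype < K := by
        refine lt_of_le_of_ne (Submodule.map_subtype_le K P) fun heq => hQ ?_
        have : P = ⊤ := by
          apply Submodule.map_injective_of_injective K.injective_subtype
          rw [heq, Submodule.map_top, Submodule.range_subtype]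
        subst this
        simpa using hPQ.inf_eq_bot
      exact (ih _ hlt).congr (Submodule.equivMapOfInjective K.subtype K.injective_subtype P).symm
    exact IsRetractOfPower.sum N₁ N₂ hc (aux N₁ N₂ hc h2) (aux N₂ N₁ hc.symm h1)
  exact (key ⊤).congr Submodule.topEquiv

lemma isGen_of_isRetract (h : IsRetractOfPower A U A) : IsGen A U := by
  obtain ⟨κ, _, a, b, hab⟩ := h
  refine ⟨κ, inferInstance, fun k => a k 1, b, ?_⟩
  simpa [LinearMap.sum_apply] using DFunLike.congr_fun hab 1

lemma finite_of_frt (hfin : HasFiniteRepresentationType A) {κ : Type u} (X : κ → ModuleCat.{u} A)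
    (hX : ∀ i, Module.Finite A (X i) ∧ IsIndecomposableModule A (X i))
    (hirr : ∀ i j, Nonempty (X i ≃ₗ[A] X j) → i = j) : Finite κ := by
  obtain ⟨_, n, M, _, hM⟩ := hfin
  choose f hf using fun i => hM (X i) (hX i).1 (hX i).2
  refine Finite.of_injective f fun i j hij => hirr i j ?_
  obtain ⟨e⟩ := hf i
  obtain ⟨e'⟩ := hf j
  rw [← hij] at e'
  exact ⟨e.trans e'.symm⟩

lemma indec_of_simple (X : Type u) [AddCommGroup X] [Module A X] [IsSimpleModule A X] :
    IsIndecomposableModule A X := by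
  refine ⟨IsSimpleModule.nontrivial A X, fun N₁ N₂ h => ?_⟩
  rcases eq_bot_or_eq_top N₁ with h1 | h1
  · exact Or.inl h1
  · subst h1
    exact Or.inr (by simpa using h.inf_eq_bot)

lemma meets_of_hull {E S : Type u} [AddCommGroup E] [Module A E] [AddCommGroup S] [Module A S]
    [IsSimpleModule A S] (j : S →ₗ[A] E)
    (hess : IsEssentialSubmodule A (LinearMap.range j)) (K : Submodule A E) (hK : K ≠ ⊥) :
    LinearMap.range j ≤ K := by
  have h := hess K hK
  obtain ⟨x, hx, hx0⟩ := Submodule.exists_mem_ne_zero_of_ne_bot h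
  obtain ⟨⟨s, rfl⟩, hsK⟩ := hx
  have hs : s ≠ 0 := by rintro rfl; exact hx0 (map_zero j)
  have htop := IsSimpleModule.span_singleton_eq_top A hs
  have h' : (⊤ : Submodule A S) ≤ K.comap j := by
    rw [← htop, Submodule.span_le]
    simpa using hsK
  rintro _ ⟨t, rfl⟩
  exact h' (Submodule.mem_top (x := t))

lemma indec_of_hull {E S : Type u} [AddCommGroup E] [Module A E] [AddCommGroup S] [Module A S]
    [IsSimpleModule A S] (j : S →ₗ[A] E) (hj : Function.Injective j)
    (hess : IsEssentialSubmodule A (LinearMap.range j)) : IsIndecomposableModule A E := by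
  have := IsSimpleModule.nontrivial A S
  refine ⟨hj.nontrivial, fun N₁ N₂ h => ?_⟩
  by_contra hcon
  rw [not_or] at hcon
  have hle : LinearMap.range j ≤ N₁ ⊓ N₂ :=
    le_inf (meets_of_hull j hess _ hcon.1) (meets_of_hull j hess _ hcon.2)
  rw [h.inf_eq_bot, le_bot_iff, LinearMap.range_eq_bot] at hle
  obtain ⟨s, hs⟩ := exists_ne (0 : S)
  exact hs (hj (by simp [hle]))

lemma isCogen_of_simple (hW : Module.Injective A W)
    (hS : ∀ (X : Type u) [AddCommGroup X] [Module A X] [IsSimpleModule A X],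
      ∃ f : X →ₗ[A] W, Function.Injective f) : IsCogen A W := by
  intro X _ _ x hx
  have hne : Submodule.span A {x} ≠ ⊥ := by simpa using hx
  let x' : Submodule.span A {x} := ⟨x, Submodule.mem_span_singleton_self x⟩
  have : Nontrivial (Submodule.span A {x}) := (Submodule.nontrivial_iff_ne_bot).2 hne
  obtain ⟨m, hm, -⟩ := (eq_top_or_exists_le_coatom (⊥ : Submodule A (Submodule.span A {x}))
    ).resolve_left bot_ne_top
  have hsimp : IsSimpleModule A (Submodule.span A {x} ⧸ m) := isSimpleModule_iff_isCoatom.2 hm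
  obtain ⟨f, hf⟩ := hS (Submodule.span A {x} ⧸ m)
  obtain ⟨g, hg⟩ := hW.out (Submodule.span A {x}).subtype
    (Submodule.injective_subtype _) (f ∘ₗ m.mkQ)
  refine ⟨g, fun h0 => ?_⟩
  have h1 := hg x'
  have h2 : f (m.mkQ x') = 0 := by rw [← LinearMap.comp_apply, ← h1]; exact h0
  have h3 : m.mkQ x' = 0 := hf (by rw [h2, map_zero])
  rw [Submodule.mkQ_apply, Submodule.Quotient.mk_eq_zero] at h3
  apply hm.1
  rw [eq_top_iff]
  rintro ⟨y, hy⟩ -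
  obtain ⟨a, rfl⟩ := Submodule.mem_span_singleton.1 hy
  exact m.smul_mem a h3

/-- Any nonzero submodule of `W` contains the socle of some `E i`. -/
lemma exists_socle_le {ι : Type u} [Fintype ι] [DecidableEq ι] (S E : ι → ModuleCat.{u} A)
    (hS : ∀ i, IsSimpleModule A (S i))
    (hirr : ∀ i j, Nonempty ((S i) ≃ₗ[A] (S j)) → i = j)
    (j : ∀ i, S i →ₗ[A] E i) (hj : ∀ i, Function.Injective (j i))
    (hess : ∀ i, IsEssentialSubmodule A (LinearMap.range (j i)))
    (e : W ≃ₗ[A] (∀ i, E i)) [IsArtinian A W] (K : Submodule A W) (hK : K ≠ ⊥) :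
    ∃ i, ∀ s : S i, e.symm (Pi.single i (j i s)) ∈ K := by
  obtain ⟨T, hT, hTK⟩ := (IsAtomic.eq_bot_or_exists_atom_le K).resolve_left hK
  have hTs : IsSimpleModule A T := isSimpleModule_iff_isAtom.2 hT
  let p : ∀ i, T →ₗ[A] E i := fun i => LinearMap.proj i ∘ₗ e.toLinearMap ∘ₗ T.subtype
  have key : ∀ i, p i ≠ 0 → LinearMap.range (p i) = LinearMap.range (j i) ∧
      Nonempty (T ≃ₗ[A] S i) := by
    intro i hi
    have hinj : Function.Injective (p i) := (LinearMap.injective_or_eq_zero (p i)).resolve_right hi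
    have hle : LinearMap.range (j i) ≤ LinearMap.range (p i) :=
      meets_of_hull (j i) (hess i) _ (by simpa [LinearMap.range_eq_bot] using hi)
    have hsi : IsSimpleModule A (LinearMap.range (p i)) :=
      IsSimpleModule.congr (LinearEquiv.ofInjective _ hinj).symm
    have hat := isSimpleModule_iff_isAtom.1 hsi
    have hne : LinearMap.range (j i) ≠ ⊥ := by
      rw [Ne, LinearMap.range_eq_bot]
      intro h0
      have := hS i
      have := IsSimpleModule.nontrivial A (S i)
      obtain ⟨s, hs⟩ := exists_ne (0 : S i)
      exact hs (hj i (by simp [h0]))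
    have heq : LinearMap.range (p i) = LinearMap.range (j i) :=
      ((hat.le_iff.1 hle).resolve_left hne).symm
    exact ⟨heq, ⟨(LinearEquiv.ofInjective _ hinj).trans ((LinearEquiv.ofEq _ _ heq).trans
      (LinearEquiv.ofInjective _ (hj i)).symm)⟩⟩
  have hex : ∃ i, p i ≠ 0 := by
    by_contra hcon
    push Not at hcon
    have := IsSimpleModule.nontrivial A T
    obtain ⟨t, ht⟩ := exists_ne (0 : T)
    apply ht
    apply Subtype.ext
    apply e.injective
    rw [Submodule.coe_zero, map_zero]
    ext i
    exact DFunLike.congr_fun (hcon i) t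
  obtain ⟨i, hi⟩ := hex
  refine ⟨i, fun s => hTK ?_⟩
  obtain ⟨heq, ⟨e₁⟩⟩ := key i hi
  have hmem : j i s ∈ LinearMap.range (p i) := by rw [heq]; exact ⟨s, rfl⟩
  obtain ⟨t, ht⟩ := hmem
  have : e.symm (Pi.single i (j i s)) = t.1 := by
    rw [LinearEquiv.symm_apply_eq, ← ht]
    ext k
    by_cases hk : k = i
    · subst hk
      rw [Pi.single_eq_same]; rfl
    · rw [Pi.single_eq_of_ne hk]
      by_contra hne
      have hk0 : p k ≠ 0 := fun h0 => hne (DFunLike.congr_fun h0 t).symm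
      obtain ⟨-, ⟨e₂⟩⟩ := key k hk0
      exact hk (hirr _ _ ⟨e₂.symm.trans e₁⟩)
  rw [this]
  exact t.2

/-- `Hom(U, W)` is a direct summand of every faithful module. -/
lemma summand_of_faithful {ι : Type u} [Fintype ι] [DecidableEq ι] (S E : ι → ModuleCat.{u} A)
    (hS : ∀ i, IsSimpleModule A (S i))
    (j : ∀ i, S i →ₗ[A] E i) (hj : ∀ i, Function.Injective (j i))
    (e : W ≃ₗ[A] (∀ i, E i))
    (hsoc : ∀ K : Submodule A W, K ≠ ⊥ → ∃ i, ∀ s : S i, e.symm (Pi.single i (j i s)) ∈ K)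
    (hgen : IsGen A U) (hW : Module.Injective A W)
    (σ : ∀ i, E i →ₗ[A] U) (hσ : ∀ i, Function.Injective (σ i))
    (N : ModuleCat.{u} (Module.End A U)ᵐᵒᵖ) (hN : IsFaithfulModule (Module.End A U)ᵐᵒᵖ N) :
    ∃ (i : (U →ₗ[A] W) →ₗ[(Module.End A U)ᵐᵒᵖ] N) (p : N →ₗ[(Module.End A U)ᵐᵒᵖ] (U →ₗ[A] W)),
      p ∘ₗ i = LinearMap.id := by
  have hinj := hom_injective_of_isGen hgen hW
  obtain ⟨κ, _, v, b, hb⟩ := hgen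
  -- for each `i`, a generator of the socle of `Hom(U, E i)`
  have hq : ∀ i, ∃ (c : A →ₗ[A] S i) (b' : U →ₗ[A] A), c ∘ₗ b' ≠ 0 := by
    intro i
    have := hS i
    have := IsSimpleModule.nontrivial A (S i)
    obtain ⟨s, hs⟩ := exists_ne (0 : S i)
    by_contra hcon
    push Not at hcon
    apply hs
    have h1 : ∀ k, (b k (v k)) • s = 0 := fun k =>
      DFunLike.congr_fun (hcon (LinearMap.toSpanSingleton A _ s) (b k)) (v k)
    rw [← one_smul A s, ← hb, Finset.sum_smul]
    exact Finset.sum_eq_zero fun k _ => h1 k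
  choose c b' hcb using hq
  let q : ∀ i, Module.End A U := fun i => σ i ∘ₗ j i ∘ₗ c i ∘ₗ b' i
  have hq0 : ∀ i, q i ≠ 0 := by
    intro i h0
    apply hcb i
    ext u
    apply hj i
    apply hσ i
    have := DFunLike.congr_fun h0 u
    simpa [q] using this
  have hn : ∀ i, ∃ n : N, MulOpposite.op (q i) • n ≠ 0 := by
    intro i
    by_contra hcon
    push Not at hcon
    exact hq0 i (MulOpposite.op_injective (hN _ hcon))
  choose n hn using hn
  let τ : ∀ i, W →ₗ[A] U := fun i => σ i ∘ₗ LinearMap.proj i ∘ₗ e.toLinearMap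
  let φ : (U →ₗ[A] W) →ₗ[(Module.End A U)ᵐᵒᵖ] N :=
    { toFun := fun f => ∑ i, MulOpposite.op (τ i ∘ₗ f : Module.End A U) • n i
      map_add' := by
        intro f g
        rw [← Finset.sum_add_distrib]
        refine Finset.sum_congr rfl fun i _ => ?_
        rw [← add_smul, LinearMap.comp_add]
        rfl
      map_smul' := by
        intro r f
        rw [RingHom.id_apply, Finset.smul_sum]
        refine Finset.sum_congr rfl fun i _ => ?_
        rw [← mul_smul]
        rfl }
  have hφ : Function.Injective φ := by
    rw [← LinearMap.ker_eq_bot, LinearMap.ker_eq_bot']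
    intro f hf
    by_contra hf0
    obtain ⟨i, hi⟩ := hsoc (LinearMap.range f) (by rwa [Ne, LinearMap.range_eq_bot])
    obtain ⟨y, hy⟩ := hi (c i 1)
    let r : Module.End A U := dualEnd (b' i) y
    have hfr : f ∘ₗ r = e.symm.toLinearMap ∘ₗ LinearMap.single A (fun i => E i) i ∘ₗ
        j i ∘ₗ c i ∘ₗ b' i := by
      ext u
      have hc1 : c i (b' i u) = b' i u • c i 1 := by
        rw [← map_smul, smul_eq_mul, mul_one]
      simp only [LinearMap.comp_apply, r, dualEnd, LinearMap.smulRight_apply, map_smul, hy, hc1]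
      simp
    have h1 : φ (f ∘ₗ r) = 0 := by
      have : φ (MulOpposite.op r • f) = MulOpposite.op r • φ f := map_smul φ _ _
      rw [hf, smul_zero] at this
      exact this
    have h2 : φ (f ∘ₗ r) = MulOpposite.op (q i) • n i := by
      change ∑ k, MulOpposite.op (τ k ∘ₗ (f ∘ₗ r) : Module.End A U) • n k = _
      rw [Finset.sum_eq_single i]
      · congr 2
        rw [hfr]
        ext u
        simp [τ, q]
      · intro k _ hk
        have : τ k ∘ₗ (f ∘ₗ r) = 0 := by
          rw [hfr]
          ext u
          simp [τ, Pi.single_eq_of_ne hk]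
        rw [this, MulOpposite.op_zero, zero_smul]
      · simp
    exact hn i (h2.symm.trans h1)
  obtain ⟨p, hp⟩ := hinj.out φ hφ LinearMap.id
  exact ⟨φ, p, LinearMap.ext hp⟩

end HelperLemmas2


theorem hom_U_W_minimal_faithful_balanced
    (Λ : Type u) [Ring Λ]
    (_hart : IsArtinian Λᵐᵒᵖ Λᵐᵒᵖ)
    (_hfin : HasFiniteRepresentationType Λᵐᵒᵖ)
    (U : Type u) [AddCommGroup U] [Module Λᵐᵒᵖ U]
    (_hU : IsSumOfAllIndecomposables Λᵐᵒᵖ U)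
    -- a complete irredundant set of representatives of the simple right Λ-modules
    (ι : Type u) (S : ι → ModuleCat.{u} Λᵐᵒᵖ)
    (_ : ∀ i, IsSimpleModule Λᵐᵒᵖ (S i))
    (_ : ∀ i j, Nonempty ((S i) ≃ₗ[Λᵐᵒᵖ] (S j)) → i = j)
    (_ : ∀ X : ModuleCat.{u} Λᵐᵒᵖ, IsSimpleModule Λᵐᵒᵖ X → ∃ i, Nonempty (X ≃ₗ[Λᵐᵒᵖ] S i))
    -- `W`, the direct sum of injective hulls of the simple right Λ-modules, assumed f.g.
    (E : ι → ModuleCat.{u} Λᵐᵒᵖ) (_ : ∀ i, IsInjectiveHullOf Λᵐᵒᵖ (E i) (S i))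
    (W : Type u) [AddCommGroup W] [Module Λᵐᵒᵖ W] (_ : Nonempty (W ≃ₗ[Λᵐᵒᵖ] ⨁ i, E i))
    (_hWfg : Module.Finite Λᵐᵒᵖ W) :
    -- `Hom_Λ(U, W)` is a minimal faithful right `R`-module, `R = End_Λ(U)` …
    IsMinimalFaithfulModule (Module.End Λᵐᵒᵖ U)ᵐᵒᵖ (U →ₗ[Λᵐᵒᵖ] W) ∧
    -- … and it is balanced
    Function.Surjective
      (fun r : Module.End Λᵐᵒᵖ U => rightSmulEnd (M := U →ₗ[Λᵐᵒᵖ] W) r) := by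
  classical
  rename_i hS hirr hcomplete hE instW instMW hWE
  obtain ⟨e₀⟩ := hWE
  have hartR : IsArtinianRing Λᵐᵒᵖ := _hart
  have hSfin : Finite ι := finite_of_frt _hfin S
    (fun i => ⟨inferInstance, indec_of_simple (S i)⟩) hirr
  have : Fintype ι := Fintype.ofFinite ι
  have e : W ≃ₗ[Λᵐᵒᵖ] (∀ i, E i) :=
    e₀.trans (DirectSum.linearEquivFunOnFintype Λᵐᵒᵖ ι (fun i => E i))
  have hEinj : ∀ i, Module.Injective Λᵐᵒᵖ (E i) := fun i => (hE i).1
  choose j hj hess using fun i => (hE i).2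
  have hWinj : Module.Injective Λᵐᵒᵖ W :=
    Module.Baer.injective (Module.Baer.of_equiv e.symm
      (Module.Baer.of_injective (Module.Injective.pi Λᵐᵒᵖ (fun i => E i))))
  have hEfin : ∀ i, Module.Finite Λᵐᵒᵖ (E i) := fun i =>
    Module.Finite.of_surjective ((LinearMap.proj i : (∀ i, E i) →ₗ[Λᵐᵒᵖ] E i) ∘ₗ e.toLinearMap)
      ((Function.surjective_eval (β := fun i => E i) i).comp e.surjective)
  have hEind : ∀ i, IsIndecomposableModule Λᵐᵒᵖ (E i) := fun i =>
    indec_of_hull (j i) (hj i) (hess i)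
  obtain ⟨κ, N, ⟨hindep, hsup⟩, hN, hNirr, hNcomplete⟩ := _hU
  have hκ : Finite κ := finite_of_frt _hfin (fun k => ModuleCat.of Λᵐᵒᵖ (N k))
    (fun k => ⟨Module.Finite.iff_fg.2 (hN k).1, (hN k).2⟩) hNirr
  have hUfin : Module.Finite Λᵐᵒᵖ U := by
    refine ⟨?_⟩
    rw [← hsup]
    exact Submodule.fg_iSup N fun k => (hN k).1
  have hret : ∀ k, ∃ p : U →ₗ[Λᵐᵒᵖ] N k, p ∘ₗ (N k).subtype = LinearMap.id := by
    intro k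
    have hc : IsCompl (N k) (⨆ l, ⨆ _ : l ≠ k, N l) := by
      refine ⟨hindep k, codisjoint_iff.2 (eq_top_iff.2 ?_)⟩
      rw [← hsup]
      refine iSup_le fun l => ?_
      by_cases hl : l = k
      · subst hl; exact le_sup_left
      · exact le_sup_of_le_right (le_iSup₂_of_le l hl le_rfl)
    exact ⟨(N k).projectionOnto _ hc, Submodule.projectionOnto_comp_subtype hc⟩
  have hgen : IsGen Λᵐᵒᵖ U := by
    apply isGen_of_isRetract
    apply isRetractOfPower_of_indec
    intro X _ _ hXf hXi
    obtain ⟨k, ⟨f⟩⟩ := hNcomplete (ModuleCat.of Λᵐᵒᵖ X) hXf hXi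
    obtain ⟨p, hp⟩ := hret k
    have hNk : IsRetractOfPower Λᵐᵒᵖ U (N k) :=
      ⟨Unit, inferInstance, fun _ => (N k).subtype, fun _ => p, by simpa using hp⟩
    exact hNk.congr f.symm
  have hσ : ∀ i, ∃ σ : E i →ₗ[Λᵐᵒᵖ] U, Function.Injective σ := by
    intro i
    obtain ⟨k, ⟨f⟩⟩ := hNcomplete (E i) (hEfin i) (hEind i)
    exact ⟨(N k).subtype ∘ₗ f.toLinearMap, (N k).injective_subtype.comp f.injective⟩
  choose σ hσ using hσ
  have hcog : IsCogen Λᵐᵒᵖ W := by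
    apply isCogen_of_simple hWinj
    intro X _ _ hX
    obtain ⟨i, ⟨f⟩⟩ := hcomplete (ModuleCat.of Λᵐᵒᵖ X) hX
    refine ⟨e.symm.toLinearMap ∘ₗ LinearMap.single Λᵐᵒᵖ (fun i => E i) i ∘ₗ j i ∘ₗ
      f.toLinearMap, ?_⟩
    exact e.symm.injective.comp ((Pi.single_injective i).comp ((hj i).comp f.injective))
  exact ⟨⟨hom_faithful_of_isCogen hcog, fun M hM =>
    summand_of_faithful S E hS j hj e
      (fun K hK => exists_socle_le S E hS hirr j hj hess e K hK) hgen hWinj σ hσ M hM⟩,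
    hom_balanced hcog hWinj⟩
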